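/- Quantum Bell–Wigner inequalities: let ρ be a three-qubit density matrix, i.e. a positive semidefinite 8×8 complex matrix of trace 1, indexed by {0,1}^3. Let ρ_{12}, ρ_{13}, ρ_{23} and ρ_1, ρ_2, ρ_3 denote its two-qubit and one-qubit reduced states, each viewed as an operator on ℂ^8 by tensoring with the identity on the traced-out factors, and define Δ = 1 − ρ_1 − ρ_2 − ρ_3 + ρ_{12} + ρ_{13} + ρ_{23} (an 8×8 hermitian matrix, where 1 is the identity). Then for every Ψ ∈ ℂ^8 with ‖Ψ‖ = 1, 0 ≤ ⟨Ψ, ΔΨ⟩ ≤ 1. -/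

import Mathlib

open scoped Matrix ComplexOrder

/-- The reduced state `ρ_A` of an `n`-qubit state `ρ`, viewed as an operator on
`(ℂ²)^{⊗n}`: `ρ_A[x,y] = (Π_{j∉A} δ_{x_j,y_j}) · Σ_w ρ[u(x,w), u(y,w)]`, where `w`
ranges over assignments of values to the coordinates outside `A` and `u(x,w)` agrees
with `x` on `A` and with `w` outside `A`. -/
noncomputable def qreduce {n : ℕ} (A : Finset (Fin n))
    (ρ : Matrix (Fin n → Bool) (Fin n → Bool) ℂ) :
    Matrix (Fin n → Bool) (Fin n → Bool) ℂ :=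
  Matrix.of fun x y =>
    (if ∀ j, j ∉ A → x j = y j then (1 : ℂ) else 0) *
      ∑ w ∈ Finset.univ.filter (fun w : Fin n → Bool => ∀ i, i ∈ A → w i = x i),
        ρ w (fun i => if i ∈ A then y i else w i)

/-! The one-qubit universal spin flip `tr(ρ) 1 - ρ` equals `ε ρᵀ εᴴ`, where `ε` is the `2 × 2`
antisymmetric symbol: this is the contraction identity
`ε_{ac} ε_{bd} = δ_{ab} δ_{cd} - δ_{ad} δ_{bc}`. Taking tensor powers and expanding,
`∑_A (-1)^|A| ρ_A = S ρᵀ Sᴴ` with `S = ε^{⊗n}`. For odd `n` the term `A = univ` is `-ρ`, so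
`Δ = ∑_{A ≠ univ} (-1)^|A| ρ_A` equals `ρ + S ρᵀ Sᴴ`, and `⟨Ψ, ΔΨ⟩ = ⟨Ψ, ρΨ⟩ + ⟨Φ, ρΦ⟩` with
`Φ = Sᵀ Ψ̄`. As `S` is unitary and, for odd `n`, antisymmetric, `Φ` is a unit vector orthogonal
to `Ψ`, so the sum lies between `0` and `tr ρ`. -/

open Matrix Finset

section PosSemidef

variable {ι R : Type*} [Fintype ι] [CommRing R] [StarRing R]

theorem isStarProjection_vecMulVec_star {u : ι → R} (hu : star u ⬝ᵥ u = 1) :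
    IsStarProjection (vecMulVec u (star u)) where
  isIdempotentElem := by simp [IsIdempotentElem, vecMulVec_mul_vecMulVec, hu]
  isSelfAdjoint := by simp [IsSelfAdjoint, star_eq_conjTranspose, conjTranspose_vecMulVec]

theorem trace_mul_vecMulVec_star (A : Matrix ι ι R) (u : ι → R) :
    (A * vecMulVec u (star u)).trace = star u ⬝ᵥ A *ᵥ u := by
  rw [mul_vecMulVec, trace_vecMulVec, dotProduct_comm]

variable [PartialOrder R] [IsOrderedAddMonoid R] {A : Matrix ι ι R}

theorem trace_mul_nonneg_of_isStarProjection {P : Matrix ι ι R} (hA : A.PosSemidef)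
    (hP : IsStarProjection P) : 0 ≤ (A * P).trace := by
  have htrace : (Pᴴ * A * P).trace = (A * P).trace := by
    rw [← star_eq_conjTranspose, hP.isSelfAdjoint.star_eq, trace_mul_cycle,
      hP.isIdempotentElem.eq, trace_mul_comm]
  exact htrace ▸ (hA.conjTranspose_mul_mul_same P).trace_nonneg

theorem trace_mul_le_trace_of_isStarProjection {P : Matrix ι ι R} (hA : A.PosSemidef)
    (hP : IsStarProjection P) : (A * P).trace ≤ A.trace := by
  classical
  simpa [mul_sub, trace_sub] using trace_mul_nonneg_of_isStarProjection hA hP.one_sub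

theorem dotProduct_mulVec_add_le_trace (hA : A.PosSemidef) {u v : ι → R}
    (hu : star u ⬝ᵥ u = 1) (hv : star v ⬝ᵥ v = 1) (huv : star u ⬝ᵥ v = 0) :
    star u ⬝ᵥ A *ᵥ u + star v ⬝ᵥ A *ᵥ v ≤ A.trace := by
  have hprojection : IsStarProjection (vecMulVec u (star u) + vecMulVec v (star v)) :=
    (isStarProjection_vecMulVec_star hu).add (isStarProjection_vecMulVec_star hv)
      (by simp [vecMulVec_mul_vecMulVec, huv])
  simpa only [mul_add, trace_add, trace_mul_vecMulVec_star] using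
    trace_mul_le_trace_of_isStarProjection hA hprojection

end PosSemidef

section SkewUnitary

variable {ι R : Type*} [Fintype ι] [CommRing R]

theorem dotProduct_vecMul_self_of_transpose_eq_neg [IsAddTorsionFree R] {S : Matrix ι ι R}
    (hS : Sᵀ = -S) (x : ι → R) : x ⬝ᵥ x ᵥ* S = 0 := by
  refine self_eq_neg.mp ?_
  calc x ⬝ᵥ x ᵥ* S = x ⬝ᵥ Sᵀ *ᵥ x := by rw [mulVec_transpose]
    _ = -(x ⬝ᵥ S *ᵥ x) := by rw [hS, neg_mulVec, dotProduct_neg]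
    _ = -(x ⬝ᵥ x ᵥ* S) := by rw [dotProduct_mulVec, dotProduct_comm]

variable [StarRing R]

theorem star_dotProduct_mul_transpose_mul_conjTranspose_mulVec (S A : Matrix ι ι R) (Ψ : ι → R) :
    star Ψ ⬝ᵥ (S * Aᵀ * Sᴴ) *ᵥ Ψ = star (star Ψ ᵥ* S) ⬝ᵥ A *ᵥ (star Ψ ᵥ* S) := by
  rw [star_vecMul, star_star, ← mulVec_mulVec, ← mulVec_mulVec, dotProduct_mulVec (star Ψ),
    mulVec_transpose, dotProduct_comm, ← dotProduct_mulVec]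

variable [DecidableEq ι]

theorem star_vecMul_dotProduct_vecMul {S : Matrix ι ι R} (hS : S * Sᴴ = 1) (x : ι → R) :
    star (x ᵥ* S) ⬝ᵥ x ᵥ* S = star x ⬝ᵥ x := by
  rw [star_vecMul, dotProduct_comm, dotProduct_mulVec, vecMul_vecMul, hS, vecMul_one,
    dotProduct_comm]

variable [PartialOrder R] [IsOrderedAddMonoid R] [IsAddTorsionFree R]

theorem dotProduct_mulVec_mem_Icc_of_skew_unitary {A S : Matrix ι ι R} (hA : A.PosSemidef)
    (hunitary : S * Sᴴ = 1) (hskew : Sᵀ = -S) {Ψ : ι → R} (hΨ : star Ψ ⬝ᵥ Ψ = 1) :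
    star Ψ ⬝ᵥ (A + S * Aᵀ * Sᴴ) *ᵥ Ψ ∈ Set.Icc 0 A.trace := by
  rw [add_mulVec, dotProduct_add, star_dotProduct_mul_transpose_mul_conjTranspose_mulVec]
  have hnorm : star (star Ψ ᵥ* S) ⬝ᵥ star Ψ ᵥ* S = 1 := by
    rw [star_vecMul_dotProduct_vecMul hunitary, star_star, dotProduct_comm, hΨ]
  have horthogonal : star Ψ ⬝ᵥ star Ψ ᵥ* S = 0 :=
    dotProduct_vecMul_self_of_transpose_eq_neg hskew _
  exact ⟨add_nonneg (hA.dotProduct_mulVec_nonneg _) (hA.dotProduct_mulVec_nonneg _),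
    dotProduct_mulVec_add_le_trace hA hΨ hnorm horthogonal⟩

end SkewUnitary

section TensorPower

variable {ι m n p R : Type*} [Fintype ι] [CommSemiring R]

/-- The Kronecker power `M^{⊗ι}`, with rows and columns indexed by functions on `ι`. -/
def tensorPower (ι : Type*) [Fintype ι] (M : Matrix m n R) : Matrix (ι → m) (ι → n) R :=
  of fun x y => ∏ i, M (x i) (y i)

theorem tensorPower_one [DecidableEq m] : tensorPower ι (1 : Matrix m m R) = 1 := by
  classical
  ext x y
  simp [tensorPower, one_apply, Fintype.prod_boole, funext_iff]

theorem tensorPower_mul [DecidableEq ι] [Fintype n] (M : Matrix m n R) (N : Matrix n p R) :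
    tensorPower ι (M * N) = tensorPower ι M * tensorPower ι N := by
  ext x y
  simp only [tensorPower, of_apply, mul_apply, Fintype.prod_sum, prod_mul_distrib]

theorem transpose_tensorPower (M : Matrix m n R) : (tensorPower ι M)ᵀ = tensorPower ι Mᵀ := rfl

theorem conjTranspose_tensorPower [StarRing R] (M : Matrix m n R) :
    (tensorPower ι M)ᴴ = tensorPower ι Mᴴ := by
  ext x y
  simp [tensorPower]

theorem tensorPower_neg {R : Type*} [CommRing R] (M : Matrix m n R) :
    tensorPower ι (-M) = (-1 : R) ^ Fintype.card ι • tensorPower ι M := by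
  ext x y
  simp [tensorPower, prod_neg]

end TensorPower

section SpinFlip

variable {R : Type*} [CommRing R]

/-- The antisymmetric symbol `ε` on one qubit, i.e. `iσ_y`. -/
def epsilon (R : Type*) [CommRing R] : Matrix Bool Bool R :=
  of fun a b => if a = b then 0 else if b then 1 else -1

theorem epsilon_mul_epsilon (a b c d : Bool) :
    epsilon R a c * epsilon R b d =
      (if a = b ∧ d = c then 1 else 0) - if a = d ∧ b = c then 1 else 0 := by
  cases a <;> cases b <;> cases c <;> cases d <;> simp [epsilon]

theorem transpose_epsilon : (epsilon R)ᵀ = -epsilon R := by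
  ext a b
  cases a <;> cases b <;> simp [epsilon]

theorem star_epsilon_apply [StarRing R] (a b : Bool) : star (epsilon R a b) = epsilon R a b := by
  cases a <;> cases b <;> simp [epsilon]

theorem epsilon_mul_conjTranspose [StarRing R] : epsilon R * (epsilon R)ᴴ = 1 := by
  ext a b
  cases a <;> cases b <;> simp [epsilon, mul_apply]

/-- The matrix `ε^{⊗ι}` of the antiunitary spin flip `Ψ ↦ ε^{⊗ι} Ψ̄` on the qubits `ι`. -/
def spinFlip (ι R : Type*) [Fintype ι] [CommRing R] : Matrix (ι → Bool) (ι → Bool) R :=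
  tensorPower ι (epsilon R)

variable {ι : Type*} [Fintype ι]

theorem spinFlip_mul_conjTranspose [DecidableEq ι] [StarRing R] :
    spinFlip ι R * (spinFlip ι R)ᴴ = 1 := by
  rw [spinFlip, conjTranspose_tensorPower, ← tensorPower_mul, epsilon_mul_conjTranspose,
    tensorPower_one]

theorem transpose_spinFlip (hι : Odd (Fintype.card ι)) : (spinFlip ι R)ᵀ = -spinFlip ι R := by
  rw [spinFlip, transpose_tensorPower, transpose_epsilon, tensorPower_neg, hι.neg_one_pow,
    neg_one_smul]

theorem spinFlip_mul_transpose_mul_conjTranspose_apply [DecidableEq ι] [StarRing R]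
    (ρ : Matrix (ι → Bool) (ι → Bool) R) (x y : ι → Bool) :
    (spinFlip ι R * ρᵀ * (spinFlip ι R)ᴴ) x y =
      ∑ w, ∑ v, (∏ i, epsilon R (x i) (v i) * epsilon R (y i) (w i)) * ρ w v := by
  simp only [mul_apply, sum_mul, transpose_apply, conjTranspose_apply, spinFlip, tensorPower,
    of_apply, star_prod, star_epsilon_apply, prod_mul_distrib]
  exact sum_congr rfl fun w _ => sum_congr rfl fun v _ => mul_right_comm _ _ _

end SpinFlip

section ReducedStates

variable {n : ℕ} (ρ : Matrix (Fin n → Bool) (Fin n → Bool) ℂ)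

theorem qreduce_empty : qreduce ∅ ρ = ρ.trace • 1 := by
  ext x y
  simp [qreduce, trace, one_apply, funext_iff]

theorem qreduce_univ : qreduce univ ρ = ρ := by
  ext x y
  simp [qreduce, ← funext_iff, filter_eq']

theorem qreduce_apply_eq_sum_prod (A : Finset (Fin n)) (x y : Fin n → Bool) :
    qreduce A ρ x y = ∑ w, ∑ v,
      ((∏ i ∈ univ \ A, if x i = y i ∧ w i = v i then 1 else 0) *
        ∏ i ∈ A, if x i = w i ∧ y i = v i then 1 else 0) * ρ w v := by
  simp only [qreduce, of_apply, sum_filter, mul_sum]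
  refine sum_congr rfl fun w _ => ?_
  rw [Fintype.sum_eq_single fun i => if i ∈ A then y i else w i]
  · simp +contextual [prod_boole, eq_comm]
  · intro v hv
    obtain ⟨i, hi⟩ := Function.ne_iff.mp hv
    by_cases hiA : i ∈ A
    · rw [prod_eq_zero hiA (if_neg fun h => hi (by rw [if_pos hiA, h.2])), mul_zero, zero_mul]
    · rw [prod_eq_zero (mem_sdiff.mpr ⟨mem_univ i, hiA⟩)
        (if_neg fun h => hi (by rw [if_neg hiA, h.2])), zero_mul, zero_mul]

theorem sum_neg_one_pow_card_smul_qreduce :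
    ∑ A, (-1 : ℂ) ^ #A • qreduce A ρ = spinFlip (Fin n) ℂ * ρᵀ * (spinFlip (Fin n) ℂ)ᴴ := by
  ext x y
  simp_rw [spinFlip_mul_transpose_mul_conjTranspose_apply, epsilon_mul_epsilon, prod_sub,
    powerset_univ, sum_mul, Matrix.sum_apply, Matrix.smul_apply, qreduce_apply_eq_sum_prod,
    smul_sum, smul_eq_mul, mul_assoc]
  rw [sum_comm]
  exact sum_congr rfl fun w _ => sum_comm

theorem sum_ssubsets_neg_one_pow_card_smul_qreduce (hn : Odd n) :
    ∑ A ∈ univ.ssubsets, (-1 : ℂ) ^ #A • qreduce A ρ =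
      ρ + spinFlip (Fin n) ℂ * ρᵀ * (spinFlip (Fin n) ℂ)ᴴ := by
  rw [← sum_neg_one_pow_card_smul_qreduce, ← powerset_univ,
    ← sum_erase_add _ _ (mem_powerset_self _)]
  simp [qreduce_univ, hn.neg_one_pow, ssubsets, add_comm]

theorem sum_ssubsets_qreduce_three (ρ : Matrix (Fin 3 → Bool) (Fin 3 → Bool) ℂ) :
    ∑ A ∈ univ.ssubsets, (-1 : ℂ) ^ #A • qreduce A ρ =
      ρ.trace • 1 - qreduce {0} ρ - qreduce {1} ρ - qreduce {2} ρ
        + qreduce {0, 1} ρ + qreduce {0, 2} ρ + qreduce {1, 2} ρ := by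
  have hssubsets : (univ : Finset (Fin 3)).ssubsets =
      {∅, {0}, {1}, {2}, {0, 1}, {0, 2}, {1, 2}} := by decide
  rw [hssubsets]
  repeat rw [sum_insert (by decide)]
  simp [qreduce_empty, sub_eq_add_neg, add_assoc]

end ReducedStates

theorem stmt_10_general {n : ℕ} (hn : Odd n) {ρ : Matrix (Fin n → Bool) (Fin n → Bool) ℂ}
    (hρ : ρ.PosSemidef) {Ψ : (Fin n → Bool) → ℂ} (hΨ : star Ψ ⬝ᵥ Ψ = 1) :
    star Ψ ⬝ᵥ (∑ A ∈ univ.ssubsets, (-1 : ℂ) ^ #A • qreduce A ρ) *ᵥ Ψ ∈ Set.Icc 0 ρ.trace := by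
  rw [sum_ssubsets_neg_one_pow_card_smul_qreduce ρ hn]
  exact dotProduct_mulVec_mem_Icc_of_skew_unitary hρ spinFlip_mul_conjTranspose
    (transpose_spinFlip (by rwa [Fintype.card_fin])) hΨ

/-- Theorem 5 of the paper: quantum Bell–Wigner inequalities.
If `ρ` is a three-qubit density matrix with one- and two-qubit reduced states
`ρ_1, ρ_2, ρ_3, ρ_{12}, ρ_{13}, ρ_{23}` (viewed as operators on `ℂ⁸`), and
`Δ = 1 - ρ_1 - ρ_2 - ρ_3 + ρ_{12} + ρ_{13} + ρ_{23}`, then for every normalised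
`Ψ ∈ ℂ⁸` one has `0 ≤ ⟨Ψ, ΔΨ⟩ ≤ 1`. -/
theorem stmt_10 (ρ : Matrix (Fin 3 → Bool) (Fin 3 → Bool) ℂ)
    (hpsd : ρ.PosSemidef) (htr : ρ.trace = 1)
    (Δ : Matrix (Fin 3 → Bool) (Fin 3 → Bool) ℂ)
    (hΔ : Δ = 1 - qreduce {0} ρ - qreduce {1} ρ - qreduce {2} ρ
        + qreduce {0, 1} ρ + qreduce {0, 2} ρ + qreduce {1, 2} ρ)
    (Ψ : (Fin 3 → Bool) → ℂ) (hΨ : star Ψ ⬝ᵥ Ψ = 1) :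
    0 ≤ star Ψ ⬝ᵥ Δ.mulVec Ψ ∧ star Ψ ⬝ᵥ Δ.mulVec Ψ ≤ 1 := by
  simpa [hΔ, htr, sum_ssubsets_qreduce_three] using
    stmt_10_general (n := 3) (by decide) hpsd hΨ
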